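/- Let n ≥ 2, let a = (a₁,…,aₙ) be a rationally independent tuple of positive real numbers, and let c ≥ 2 be an integer. If a_s > M^{(a₁,a₂)}_{c−1} for every s with 3 ≤ s ≤ n, then Assumption A holds for (a, c): for every integer k ≥ 2 and all positive integers i₁,…,i_k with i₁+⋯+i_k+k−1 ≤ c−1, one has M^a_{i₁} + ⋯ + M^a_{i_k} ≤ M^a_{i₁+⋯+i_k+k−1}. -/

import Mathlib

/-- `ellM a k` is the `k`-th smallest element, counted with multiplicity, of the
multiset `{i · a_j : i ∈ ℤ_{≥1}, 1 ≤ j ≤ n}` (for `a` a tuple of positive reals):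
it is the least real `x` such that at least `k` pairs `(j, i)` with `i ≥ 1`
satisfy `i · a_j ≤ x`. -/
noncomputable def ellM {n : ℕ} (a : Fin n → ℝ) (k : ℕ) : ℝ :=
  sInf {x : ℝ | k ≤ Nat.card {p : Fin n × ℕ // ((p.2 : ℝ) + 1) * a p.1 ≤ x}}

/-- Assumption A of the paper for the data `(a, c)` (`c` playing the role of `c₁(A)`):
for every `k ≥ 2` and all `i₁,…,i_k ∈ ℤ_{≥1}` with `i₁+⋯+i_k+k−1 ≤ c−1`, one has
`M^a_{i₁} + ⋯ + M^a_{i_k} ≤ M^a_{i₁+⋯+i_k+k−1}`. -/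
def AssumptionA {n : ℕ} (a : Fin n → ℝ) (c : ℕ) : Prop :=
  ∀ k : ℕ, 2 ≤ k → ∀ i : Fin k → ℕ, (∀ t, 1 ≤ i t) →
    (∑ t, i t) + k - 1 ≤ c - 1 →
    (∑ t, ellM a (i t)) ≤ ellM a ((∑ t, i t) + k - 1)

/-!
Let `N(x) = ∑ j, ⌊x / a_j⌋` count the multiples that are at most `x`, so that `y ≤ M_k` exactly
when `N(x) < k` for all `x < y`. Since `⌊u + v⌋ ≤ ⌊u⌋ + ⌊v⌋ + 1`, a tuple of length `m` satisfies
`N(u + v) ≤ N(u) + N(v) + m`. Any `x < M_i + M_j` splits as `u + v` with `u < M_i` and `v < M_j`,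
whence `N(x) < i + j + m - 1`; thus `M_i + M_j ≤ M_{i+j+m-1}`, which for `m = 2` is Assumption A
without any bound on the indices. Entries that are at least `M^{(a₁,a₂)}_{c-1}` do not contribute to
`N` below that value, so `M^a_k = M^{(a₁,a₂)}_k` for `k ≤ c - 1`.
-/

lemma natFloor_add_le {R : Type*} [Semiring R] [LinearOrder R] [IsStrictOrderedRing R]
    [FloorSemiring R] (u v : R) : ⌊u + v⌋₊ ≤ ⌊u⌋₊ + ⌊v⌋₊ + 1 := by
  refine Nat.lt_succ_iff.1 ((Nat.floor_lt' (Nat.succ_ne_zero _)).2 ?_)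
  calc u + v < (⌊u⌋₊ + 1) + (⌊v⌋₊ + 1) :=
        add_lt_add (Nat.lt_floor_add_one u) (Nat.lt_floor_add_one v)
    _ = ((⌊u⌋₊ + ⌊v⌋₊ + 1).succ : ℕ) := by push_cast; abel

section multiplesCount

variable {ι : Type*} [Fintype ι] {a : ι → ℝ}

/-- The counting function `N(x)` of the multiset of positive integer multiples of the entries
of `a`, written as a sum of floors to make it subadditive up to a constant term by term. -/
noncomputable def multiplesCount (a : ι → ℝ) (x : ℝ) : ℕ :=
  ∑ j, ⌊x / a j⌋₊

lemma card_multiples_le (ha : ∀ j, 0 < a j) (x : ℝ) :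
    Nat.card {p : ι × ℕ // ((p.2 : ℝ) + 1) * a p.1 ≤ x} = multiplesCount a x := by
  have mul_le_iff (j : ι) (i : ℕ) : ((i : ℝ) + 1) * a j ≤ x ↔ i < ⌊x / a j⌋₊ := by
    rw [← le_div_iff₀ (ha j), ← Nat.succ_le_iff, Nat.le_floor_iff' i.succ_ne_zero, Nat.cast_succ]
  let e : {p : ι × ℕ // ((p.2 : ℝ) + 1) * a p.1 ≤ x} ≃ Σ j, Fin ⌊x / a j⌋₊ :=
    { toFun := fun p => ⟨p.1.1, p.1.2, (mul_le_iff _ _).1 p.2⟩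
      invFun := fun q => ⟨(q.1, q.2), (mul_le_iff _ _).2 q.2.2⟩ }
  simp only [Nat.card_congr e, Nat.card_sigma, Nat.card_fin, multiplesCount]

lemma multiplesCount_of_nonpos (ha : ∀ j, 0 ≤ a j) {x : ℝ} (hx : x ≤ 0) :
    multiplesCount a x = 0 :=
  Finset.sum_eq_zero fun j _ =>
    Nat.floor_of_nonpos (div_nonpos_of_nonpos_of_nonneg hx (ha j))

lemma le_multiplesCount_mul {j : ι} (hj : a j ≠ 0) (k : ℕ) :
    k ≤ multiplesCount a (k * a j) :=
  calc k = ⌊k * a j / a j⌋₊ := by rw [mul_div_cancel_right₀ _ hj, Nat.floor_natCast]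
    _ ≤ multiplesCount a (k * a j) :=
      Finset.single_le_sum (f := fun l => ⌊k * a j / a l⌋₊) (fun _ _ => Nat.zero_le _)
        (Finset.mem_univ j)

lemma multiplesCount_add_le (a : ι → ℝ) (u v : ℝ) :
    multiplesCount a (u + v) ≤ multiplesCount a u + multiplesCount a v + Fintype.card ι :=
  calc multiplesCount a (u + v)
    _ ≤ ∑ j, (⌊u / a j⌋₊ + ⌊v / a j⌋₊ + 1) :=
      Finset.sum_le_sum fun j _ => by rw [add_div]; exact natFloor_add_le _ _
    _ = multiplesCount a u + multiplesCount a v + Fintype.card ι := by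
      simp only [multiplesCount, Finset.sum_add_distrib, Finset.sum_const, Finset.card_univ,
        smul_eq_mul, mul_one]

lemma multiplesCount_comp_of_lt {κ : Type*} [Fintype κ] (ha : ∀ j, 0 < a j) (e : κ ↪ ι)
    {x : ℝ} (hx : ∀ j ∉ Set.range e, x < a j) :
    multiplesCount (a ∘ e) x = multiplesCount a x :=
  Fintype.sum_of_injective e e.injective _ _
    (fun j hj => Nat.floor_eq_zero.2 ((div_lt_one (ha j)).2 (hx j hj))) fun _ => rfl

lemma multiplesCount_comp_le {κ : Type*} [Fintype κ] (a : ι → ℝ) (e : κ ↪ ι) (x : ℝ) :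
    multiplesCount (a ∘ e) x ≤ multiplesCount a x :=
  calc multiplesCount (a ∘ e) x = ∑ j ∈ Finset.univ.map e, ⌊x / a j⌋₊ :=
        (Finset.sum_map Finset.univ e fun j => ⌊x / a j⌋₊).symm
    _ ≤ multiplesCount a x := Finset.sum_le_univ_sum_of_nonneg fun _ => Nat.zero_le _

end multiplesCount

section ellM

variable {n : ℕ}

lemma le_ellM_iff [Nonempty (Fin n)] {a : Fin n → ℝ} (ha : ∀ j, 0 < a j) {k : ℕ} (hk : 1 ≤ k)
    {y : ℝ} : y ≤ ellM a k ↔ ∀ x < y, multiplesCount a x < k := by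
  have bddBelow : BddBelow {x : ℝ | k ≤ multiplesCount a x} := by
    refine ⟨0, fun x (hx : k ≤ multiplesCount a x) => le_of_not_gt fun hneg => ?_⟩
    have := multiplesCount_of_nonpos (fun j => (ha j).le) hneg.le
    omega
  obtain ⟨j⟩ := ‹Nonempty (Fin n)›
  have nonempty : {x : ℝ | k ≤ multiplesCount a x}.Nonempty :=
    ⟨k * a j, le_multiplesCount_mul (ha j).ne' k⟩
  simp only [ellM, card_multiples_le ha]
  rw [le_csInf_iff bddBelow nonempty]
  exact forall_congr' fun x => by rw [Set.mem_ofPred_eq, ← not_lt, ← not_lt, not_imp_not]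

lemma multiplesCount_lt_of_lt_ellM [Nonempty (Fin n)] {a : Fin n → ℝ} (ha : ∀ j, 0 < a j)
    {k : ℕ} (hk : 1 ≤ k) {x : ℝ} (hx : x < ellM a k) : multiplesCount a x < k :=
  (le_ellM_iff ha hk).1 le_rfl x hx

lemma ellM_monotoneOn [Nonempty (Fin n)] {a : Fin n → ℝ} (ha : ∀ j, 0 < a j) :
    MonotoneOn (ellM a) (Set.Ici 1) := fun _ hk _ hl hkl =>
  (le_ellM_iff ha hl).2 fun _ hx => (multiplesCount_lt_of_lt_ellM ha hk hx).trans_le hkl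

lemma ellM_eq_ellM_comp_of_le {m : ℕ} [Nonempty (Fin m)] {a : Fin n → ℝ} (ha : ∀ j, 0 < a j)
    (e : Fin m ↪ Fin n) {k : ℕ} (hk : 1 ≤ k)
    (hlarge : ∀ j ∉ Set.range e, ellM (a ∘ e) k ≤ a j) : ellM a k = ellM (a ∘ e) k := by
  have : Nonempty (Fin n) := .map e ‹_›
  have hae : ∀ j, 0 < (a ∘ e) j := fun j => ha (e j)
  apply le_antisymm
  · exact (le_ellM_iff hae hk).2 fun x hx =>
      (multiplesCount_comp_le a e x).trans_lt (multiplesCount_lt_of_lt_ellM ha hk hx)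
  · refine (le_ellM_iff ha hk).2 fun x hx => ?_
    rw [← multiplesCount_comp_of_lt ha e fun j hj => hx.trans_le (hlarge j hj)]
    exact multiplesCount_lt_of_lt_ellM hae hk hx

lemma ellM_add_ellM_le {a : Fin (n + 1) → ℝ} (ha : ∀ j, 0 < a j) {i j : ℕ} (hi : 1 ≤ i)
    (hj : 1 ≤ j) : ellM a i + ellM a j ≤ ellM a (i + j + n) := by
  refine (le_ellM_iff ha (by omega)).2 fun x hx => ?_
  obtain ⟨u, v, hu, hv, rfl⟩ : ∃ u v, u < ellM a i ∧ v < ellM a j ∧ u + v = x :=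
    ⟨ellM a i - (ellM a i + ellM a j - x) / 2, ellM a j - (ellM a i + ellM a j - x) / 2,
      by linarith, by linarith, by ring⟩
  have hcount := multiplesCount_add_le a u v
  rw [Fintype.card_fin] at hcount
  have hcount_u := multiplesCount_lt_of_lt_ellM ha hi hu
  have hcount_v := multiplesCount_lt_of_lt_ellM ha hj hv
  omega

lemma sum_ellM_le {a : Fin (n + 1) → ℝ} (ha : ∀ j, 0 < a j) {τ : Type*} {s : Finset τ}
    (hs : s.Nonempty) {i : τ → ℕ} (hi : ∀ t ∈ s, 1 ≤ i t) :
    ∑ t ∈ s, ellM a (i t) ≤ ellM a (∑ t ∈ s, i t + (s.card - 1) * n) := by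
  induction hs using Finset.Nonempty.cons_induction with
  | singleton t => simp
  | cons t s ht hs ih =>
    rw [Finset.forall_mem_cons] at hi
    obtain ⟨r, hr⟩ := Nat.exists_eq_add_of_le' hs.card_pos
    have one_le_sum : 1 ≤ ∑ t ∈ s, i t :=
      hs.card_pos.trans_le (by simpa using Finset.sum_le_sum hi.2)
    calc ∑ t ∈ s.cons t ht, ellM a (i t)
      _ = ellM a (i t) + ∑ t ∈ s, ellM a (i t) := Finset.sum_cons ht
      _ ≤ ellM a (i t) + ellM a (∑ t ∈ s, i t + (s.card - 1) * n) := by gcongr; exact ih hi.2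
      _ ≤ ellM a (i t + (∑ t ∈ s, i t + (s.card - 1) * n) + n) :=
        ellM_add_ellM_le ha hi.1 (one_le_sum.trans (Nat.le_add_right _ _))
      _ = ellM a (∑ t ∈ s.cons t ht, i t + ((s.cons t ht).card - 1) * n) := by
        rw [Finset.sum_cons, Finset.card_cons, hr]
        congr 1
        simp only [Nat.add_sub_cancel]
        ring

end ellM

theorem assumptionA_of_large_tail_general {n : ℕ} (hn : 2 ≤ n) {a : Fin n → ℝ}
    (hpos : ∀ s, 0 < a s) {c : ℕ}
    (hbig : ∀ s : Fin n, 2 ≤ (s : ℕ) →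
      ellM (fun j : Fin 2 => a (Fin.castLE hn j)) (c - 1) ≤ a s) :
    AssumptionA a c := by
  intro k hk i hi hle
  set b : Fin 2 → ℝ := a ∘ Fin.castLEEmb hn
  have hb : ∀ j, 0 < b j := fun j => hpos _
  have ellM_eq : ∀ l, 1 ≤ l → l ≤ c - 1 → ellM a l = ellM b l := fun l hl hlc =>
    ellM_eq_ellM_comp_of_le hpos (Fin.castLEEmb hn) hl fun s hs =>
      (ellM_monotoneOn hb hl (hl.trans hlc) hlc).trans
        (hbig s (not_lt.1 fun hs2 => hs ⟨⟨s, hs2⟩, rfl⟩))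
  have index_le (t : Fin k) : i t ≤ c - 1 := by
    have := Finset.single_le_sum (fun t _ => Nat.zero_le (i t)) (Finset.mem_univ t)
    omega
  have hk_nonempty : (Finset.univ : Finset (Fin k)).Nonempty := ⟨⟨0, by omega⟩, Finset.mem_univ _⟩
  calc ∑ t, ellM a (i t) = ∑ t, ellM b (i t) :=
        Finset.sum_congr rfl fun t _ => ellM_eq (i t) (hi t) (index_le t)
    _ ≤ ellM b (∑ t, i t + (Finset.univ.card - 1) * 1) := sum_ellM_le hb hk_nonempty fun t _ => hi t
    _ = ellM b (∑ t, i t + k - 1) := by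
      rw [Finset.card_univ, Fintype.card_fin, mul_one, Nat.add_sub_assoc (by omega)]
    _ = ellM a (∑ t, i t + k - 1) := (ellM_eq _ (by omega) hle).symm

/-- If `a = (a₁,…,aₙ)` is a rationally independent tuple of positive reals with
`a_s > M^{(a₁,a₂)}_{c−1}` for all `3 ≤ s ≤ n`, then Assumption A holds for `(a, c)`. -/
theorem assumptionA_of_large_tail
    (n : ℕ) (hn : 2 ≤ n) (a : Fin n → ℝ) (hpos : ∀ s, 0 < a s)
    (hindep : LinearIndependent ℚ a)
    (c : ℕ) (hc : 2 ≤ c)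
    (hbig : ∀ s : Fin n, 2 ≤ (s : ℕ) →
      ellM (fun j : Fin 2 => a (Fin.castLE hn j)) (c - 1) < a s) :
    AssumptionA a c :=
  assumptionA_of_large_tail_general hn hpos fun s hs => (hbig s hs).le
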